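/- Fix 1 ≤ q < ∞. Let σ be uniformly distributed on S_n, let μ_n = E_n[ρ_q] and s_n = √(Var_n ρ_q). Then there is a constant C such that for all n ≥ 2, sup_{x ∈ ℝ} | P_n[ (ρ_q(σ²) − μ_n)/s_n ≤ x ] − Φ(x) | ≤ C (log n)/n^{1/2}; in particular, the statistic ρ_{q,2}(σ) = Σ_{i=1}^n |σ²(i) − i|^q is asymptotically Gaussian under the same normalization as ρ_q. -/

import Mathlib

open scoped BigOperators Classical
open Finset Filter

/-- Probability of an event under the uniform measure on `S_n`. -/
noncomputable def Pn {n : ℕ} (p : Equiv.Perm (Fin n) → Prop) : ℝ :=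
  ((Finset.univ.filter p).card : ℝ) / (Fintype.card (Equiv.Perm (Fin n)) : ℝ)

/-- Expectation under the uniform measure on `S_n`. -/
noncomputable def En {n : ℕ} (g : Equiv.Perm (Fin n) → ℝ) : ℝ :=
  (∑ σ : Equiv.Perm (Fin n), g σ) / (Fintype.card (Equiv.Perm (Fin n)) : ℝ)

/-- Variance under the uniform measure on `S_n`. -/
noncomputable def VarN {n : ℕ} (g : Equiv.Perm (Fin n) → ℝ) : ℝ :=
  En (fun σ => (g σ - En g) ^ 2)

/-- Spearman's metric `ρ_q(σ) = Σ_i |σ(i) − i|^q`. -/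
noncomputable def rhoq (q : ℝ) {n : ℕ} (σ : Equiv.Perm (Fin n)) : ℝ :=
  ∑ i : Fin n, |((σ i : ℕ) : ℝ) - ((i : ℕ) : ℝ)| ^ q

/-- The standard normal cumulative distribution function `Φ`. -/
noncomputable def stdNormalCDF (x : ℝ) : ℝ :=
  ∫ t in Set.Iic x, Real.exp (-t ^ 2 / 2) / Real.sqrt (2 * Real.pi)


noncomputable def gphi (t : ℝ) : ℝ := Real.exp (-t ^ 2 / 2) / Real.sqrt (2 * Real.pi)

lemma gphi_cont : Continuous gphi := by unfold gphi; fun_prop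

lemma sqrt2pi_ge : 1 ≤ Real.sqrt (2 * Real.pi) := by
  rw [Real.one_le_sqrt]; nlinarith [Real.pi_gt_three]

lemma gexp_integrable : MeasureTheory.Integrable (fun t : ℝ => Real.exp (-t ^ 2 / 2)) := by
  have := integrable_exp_neg_mul_sq (b := 1/2) (by norm_num)
  convert this using 3
  ring

lemma gexp_integral : ∫ t : ℝ, Real.exp (-t ^ 2 / 2) = Real.sqrt (2 * Real.pi) := by
  have := integral_gaussian (1/2)
  rw [show Real.pi / (1/2) = 2 * Real.pi by ring] at this
  rw [← this]
  congr 1; ext t; congr 1; ring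

lemma gphi_integrable : MeasureTheory.Integrable gphi := gexp_integrable.div_const _

lemma gphi_integral : ∫ t : ℝ, gphi t = 1 := by
  unfold gphi
  rw [MeasureTheory.integral_div, gexp_integral, div_self]
  have := sqrt2pi_ge; positivity

lemma gphi_pos (t : ℝ) : 0 < gphi t := by unfold gphi; positivity

lemma gphi_le (t : ℝ) : gphi t ≤ 1 := by
  unfold gphi
  rw [div_le_one (by positivity)]
  refine le_trans ?_ sqrt2pi_ge
  rw [Real.exp_le_one_iff]; nlinarith [sq_nonneg t]

lemma N_eq (x : ℝ) : stdNormalCDF x = ∫ t in Set.Iic x, gphi t := rfl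

lemma N_sub (x y : ℝ) : stdNormalCDF y - stdNormalCDF x = ∫ t in x..y, gphi t := by
  rw [N_eq, N_eq]
  exact intervalIntegral.integral_Iic_sub_Iic gphi_integrable.integrableOn gphi_integrable.integrableOn

lemma N_deriv (x : ℝ) : HasDerivAt stdNormalCDF (gphi x) x := by
  have h : stdNormalCDF = fun y => stdNormalCDF 0 + ∫ t in (0:ℝ)..y, gphi t := by
    ext y; rw [← N_sub]; ring
  rw [h]
  exact (intervalIntegral.integral_hasDerivAt_right (gphi_cont.intervalIntegrable _ _)
    (gphi_cont.stronglyMeasurableAtFilter _ _) gphi_cont.continuousAt).const_add _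

lemma N_nonneg (x : ℝ) : 0 ≤ stdNormalCDF x := by
  rw [N_eq]; exact MeasureTheory.integral_nonneg fun t => (gphi_pos t).le

lemma N_mono : Monotone stdNormalCDF := 
  monotone_of_deriv_nonneg (fun x => (N_deriv x).differentiableAt)
    (fun x => by rw [(N_deriv x).deriv]; exact (gphi_pos x).le)

lemma N_neg (x : ℝ) : stdNormalCDF (-x) = 1 - stdNormalCDF x := by
  have h1 : stdNormalCDF (-x) = ∫ t in Set.Ioi x, gphi t := by
    rw [N_eq, ← integral_comp_neg_Ioi]
    congr 1; ext t; simp [gphi]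
  have h2 := MeasureTheory.integral_add_compl (s := Set.Iic x) measurableSet_Iic gphi_integrable
  rw [Set.compl_Iic, gphi_integral] at h2
  rw [h1, N_eq]; linarith

lemma N_le_one (x : ℝ) : stdNormalCDF x ≤ 1 := by
  have := N_nonneg (-x); rw [N_neg] at this; linarith

lemma N_lip (x δ : ℝ) (hδ : 0 ≤ δ) : stdNormalCDF (x + δ) ≤ stdNormalCDF x + δ := by
  have h := N_sub x (x+δ)
  have : ∫ t in x..(x+δ), gphi t ≤ ∫ t in x..(x+δ), (1:ℝ) :=
    intervalIntegral.integral_mono_on (by linarith) (gphi_cont.intervalIntegrable _ _)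
      (continuous_const.intervalIntegrable _ _) (fun t _ => gphi_le t)
  simp at this
  linarith

lemma gphi_deriv (t : ℝ) : HasDerivAt gphi ((-t) * gphi t) t := by
  have h1 : HasDerivAt (fun t : ℝ => -t^2/2) (-t) t := by
    refine (((hasDerivAt_pow 2 t).neg).div_const 2).congr_deriv ?_
    norm_num; ring
  refine (h1.exp.div_const (Real.sqrt (2 * Real.pi))).congr_deriv ?_
  unfold gphi
  ring

lemma mills1 (w : ℝ) (_ : w ≤ 0) : -w * stdNormalCDF w ≤ gphi w := by
  -- h(w) = gphi w + w N w is monotone on ℝ with limit 0 at -∞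
  have hint : ∫ t in Set.Iic w, (-t) * gphi t = gphi w ∧ MeasureTheory.IntegrableOn (fun t => (-t) * gphi t) (Set.Iic w) := by
    have hd : ∀ t ∈ Set.Iic w, HasDerivAt gphi ((-t) * gphi t) t := by
      exact fun t _ => gphi_deriv t
    have hi : MeasureTheory.IntegrableOn (fun t => (-t) * gphi t) (Set.Iic w) := by
      have := (integrable_mul_exp_neg_mul_sq (b := 1/2) (by norm_num)).neg.div_const (Real.sqrt (2 * Real.pi))
      refine MeasureTheory.Integrable.integrableOn ?_
      convert this using 2 with t
      simp only [gphi, Pi.neg_apply]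
      rw [show -t^2/2 = -(1/2)*t^2 by ring]; ring
    refine ⟨?_, hi⟩
    have ht : Tendsto gphi atBot (nhds 0) := by
      have : Tendsto (fun t : ℝ => -t^2/2) atBot atBot := by
        have : Tendsto (fun t : ℝ => t^2) atBot atTop := by
          have h := (tendsto_pow_atTop (α := ℝ) (n := 2) (by norm_num)).comp tendsto_neg_atBot_atTop
          refine h.congr (fun t => by simp)
        have h2 := (this.atTop_div_const (r := 2) (by norm_num))
        refine (tendsto_neg_atTop_atBot.comp h2).congr (fun t => by simp [neg_div])
      have := (Real.tendsto_exp_atBot.comp this).div_const (Real.sqrt (2 * Real.pi))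
      rw [zero_div] at this
      exact this
    have := MeasureTheory.integral_Iic_of_hasDerivAt_of_tendsto' hd hi ht
    simpa using this
  rw [N_eq, ← MeasureTheory.integral_const_mul, ← hint.1]
  apply MeasureTheory.setIntegral_mono_on (gphi_integrable.integrableOn.const_mul _) hint.2 measurableSet_Iic
  intro t ht
  have := gphi_pos t
  simp at ht
  nlinarith

lemma mills2 (w : ℝ) (hw : w ≤ 0) : stdNormalCDF w ≤ Real.sqrt (2 * Real.pi) * gphi w := by
  have h1 : stdNormalCDF w ≤ ∫ t in Set.Iic w, Real.sqrt (2 * Real.pi) * gphi w * gphi (t - w) := by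
    rw [N_eq]
    apply MeasureTheory.setIntegral_mono_on gphi_integrable.integrableOn
      ((gphi_integrable.comp_sub_right w).integrableOn.const_mul _) measurableSet_Iic
    intro t ht
    simp at ht
    have h0 := sqrt2pi_ge
    have : gphi w * gphi (t - w) * Real.sqrt (2 * Real.pi) = Real.exp (-w^2/2 + -(t-w)^2/2) / Real.sqrt (2 * Real.pi) := by
      unfold gphi; rw [Real.exp_add]; field_simp
    rw [show Real.sqrt (2 * Real.pi) * gphi w * gphi (t - w) = gphi w * gphi (t - w) * Real.sqrt (2 * Real.pi) by ring, this]
    unfold gphi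
    gcongr
    nlinarith
  refine h1.trans ?_
  rw [MeasureTheory.integral_const_mul]
  have h2 : ∫ t in Set.Iic w, gphi (t - w) ≤ 1 := by
    refine (MeasureTheory.setIntegral_le_integral (gphi_integrable.comp_sub_right w) ?_).trans ?_
    · exact Filter.Eventually.of_forall fun t => (gphi_pos _).le
    · rw [MeasureTheory.integral_sub_right_eq_self gphi w, gphi_integral]
  have := gphi_pos w
  have h0 := sqrt2pi_ge
  calc _ ≤ Real.sqrt (2 * Real.pi) * gphi w * 1 := by gcongr
    _ = _ := by ring

/-- bound for N(1-N)/φ -/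
lemma NN_bd (w : ℝ) : stdNormalCDF w * (1 - stdNormalCDF w) ≤ 3 * gphi w ∧
    |w| * (stdNormalCDF w * (1 - stdNormalCDF w)) ≤ gphi w := by
  have hpi : Real.sqrt (2 * Real.pi) ≤ 3 := by
    rw [Real.sqrt_le_left (by norm_num)]; nlinarith [Real.pi_lt_four]
  have key : ∀ w ≤ 0, stdNormalCDF w * (1 - stdNormalCDF w) ≤ 3 * gphi w ∧
    |w| * (stdNormalCDF w * (1 - stdNormalCDF w)) ≤ gphi w := by
    intro w hw
    have h1 := mills1 w hw
    have h2 := mills2 w hw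
    have h3 := N_nonneg w
    have h4 := N_le_one w
    have h5 := gphi_pos w
    have h6 : stdNormalCDF w * (1 - stdNormalCDF w) ≤ stdNormalCDF w := by nlinarith
    constructor
    · nlinarith
    · rw [abs_of_nonpos hw]; nlinarith
  rcases le_total w 0 with hw | hw
  · exact key w hw
  · have := key (-w) (by linarith)
    rw [N_neg, abs_neg, show gphi (-w) = gphi w by simp [gphi]] at this
    rw [show stdNormalCDF w * (1 - stdNormalCDF w) = (1 - stdNormalCDF w) * (1 - (1 - stdNormalCDF w)) by ring]
    exact this

noncomputable def steinF (x w : ℝ) : ℝ :=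
  if w ≤ x then stdNormalCDF w * (1 - stdNormalCDF x) / gphi w
  else stdNormalCDF x * (1 - stdNormalCDF w) / gphi w

lemma steinF_nonneg (x w : ℝ) : 0 ≤ steinF x w := by
  have h1 := N_nonneg w
  have h2 := N_nonneg x
  have h3 := N_le_one w
  have h4 := N_le_one x
  have h5 := gphi_pos w
  have : 0 ≤ 1 - stdNormalCDF w := by linarith
  have : 0 ≤ 1 - stdNormalCDF x := by linarith
  unfold steinF; split_ifs <;> positivity

lemma steinF_le (x w : ℝ) : steinF x w ≤ stdNormalCDF w * (1 - stdNormalCDF w) / gphi w := by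
  have h1 := N_nonneg w
  have h3 := N_le_one w
  have h5 := gphi_pos w
  unfold steinF; split_ifs with h
  · have := N_mono h
    gcongr
  · have := N_mono (le_of_lt (not_le.mp h))
    have : 0 ≤ 1 - stdNormalCDF w := by linarith
    gcongr

lemma steinF_abs (x w : ℝ) : |steinF x w| ≤ 3 := by
  rw [abs_of_nonneg (steinF_nonneg x w)]
  refine (steinF_le x w).trans ?_
  rw [div_le_iff₀ (gphi_pos w)]
  exact (NN_bd w).1

lemma steinF_mul_abs (x w : ℝ) : |w * steinF x w| ≤ 1 := by
  rw [abs_mul, abs_of_nonneg (steinF_nonneg x w)]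
  have h := mul_le_mul_of_nonneg_left (steinF_le x w) (abs_nonneg w)
  refine h.trans ?_
  rw [← mul_div_assoc, div_le_one (gphi_pos w)]
  exact (NN_bd w).2

lemma steinF_deriv (x w : ℝ) (h : w ≠ x) :
    HasDerivAt (steinF x) (w * steinF x w + (if w ≤ x then 1 else 0) - stdNormalCDF x) w := by
  have hg := (gphi_pos w).ne'
  rcases lt_or_gt_of_ne h with h | h
  · have h1 : HasDerivAt (fun w => stdNormalCDF w * (1 - stdNormalCDF x) / gphi w) _ w :=
      ((N_deriv w).mul_const (1 - stdNormalCDF x)).div (gphi_deriv w) hg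
    have h2 : steinF x =ᶠ[nhds w] (fun w => stdNormalCDF w * (1 - stdNormalCDF x) / gphi w) := by
      filter_upwards [Iio_mem_nhds h] with y hy
      simp [steinF, le_of_lt (show y < x from hy)]
    refine (h1.congr_of_eventuallyEq h2).congr_deriv ?_
    simp only [steinF, h.le, if_true]
    field_simp
    ring
  · have h1 : HasDerivAt (fun w => stdNormalCDF x * (1 - stdNormalCDF w) / gphi w) _ w :=
      (((N_deriv w).const_sub 1).const_mul (stdNormalCDF x)).div (gphi_deriv w) hg
    have h2 : steinF x =ᶠ[nhds w] (fun w => stdNormalCDF x * (1 - stdNormalCDF w) / gphi w) := by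
      filter_upwards [Ioi_mem_nhds h] with y hy
      simp [steinF, not_le.mpr (show x < y from hy)]
    refine (h1.congr_of_eventuallyEq h2).congr_deriv ?_
    simp only [steinF, not_le.mpr h, if_false]
    field_simp
    ring

lemma N_cont : Continuous stdNormalCDF :=
  continuous_iff_continuousAt.mpr fun x => (N_deriv x).continuousAt

lemma steinF_cont (x : ℝ) : Continuous (steinF x) := by
  unfold steinF
  apply Continuous.if_le
  · exact (N_cont.mul continuous_const).div gphi_cont fun w => (gphi_pos w).ne'
  · exact (continuous_const.mul (continuous_const.sub N_cont)).div gphi_cont fun w => (gphi_pos w).ne'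
  · fun_prop
  · fun_prop
  · rintro w rfl; rfl

/-- mean value with an exceptional point -/
lemma mvt_off (f F : ℝ → ℝ) (x m M : ℝ) (hc : Continuous f) (hd : ∀ w, w ≠ x → HasDerivAt f (F w) w)
    (a b : ℝ) (hab : a ≤ b) (hF : ∀ t ∈ Set.Icc a b, m ≤ F t ∧ F t ≤ M) :
    m * (b - a) ≤ f b - f a ∧ f b - f a ≤ M * (b - a) := by
  have key : ∀ a' b', a ≤ a' → a' ≤ b' → b' ≤ b → x ∉ Set.Ioo a' b' →
      m * (b' - a') ≤ f b' - f a' ∧ f b' - f a' ≤ M * (b' - a') := by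
    intro a' b' h1 h2 h3 hx
    rcases h2.eq_or_lt with rfl | h2
    · simp
    obtain ⟨c, hc1, hc2⟩ := exists_hasDerivAt_eq_slope f F h2 hc.continuousOn
      (fun t ht => hd t (by rintro rfl; exact hx ht))
    have := hF c ⟨by linarith [hc1.1], by linarith [hc1.2]⟩
    rw [hc2, le_div_iff₀ (by linarith), div_le_iff₀ (by linarith)] at this
    exact this
  by_cases hx : x ∈ Set.Ioo a b
  · have h1 := key a x le_rfl hx.1.le hx.2.le (by simp)
    have h2 := key x b hx.1.le hx.2.le le_rfl (by simp)
    constructor <;> nlinarith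
  · exact key a b le_rfl hab le_rfl hx

lemma steinF_lip (x a b : ℝ) : |steinF x b - steinF x a| ≤ 2 * |b - a| := by
  have key : ∀ a b, a ≤ b → |steinF x b - steinF x a| ≤ 2 * |b - a| := by
    intro a b hab
    have := mvt_off (steinF x) _ x (-2) 2 (steinF_cont x) (steinF_deriv x) a b hab (by
      intro t _
      have h1 := abs_le.mp (steinF_mul_abs x t)
      have h2 := N_nonneg x
      have h3 := N_le_one x
      split_ifs <;> constructor <;> linarith)
    rw [abs_of_nonneg (sub_nonneg.mpr hab), abs_le]
    constructor <;> linarith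
  rcases le_total a b with h | h
  · exact key a b h
  · rw [abs_sub_comm, abs_sub_comm b a]; exact key b a h

lemma stein_main (x w δ a b : ℝ) (ha : |a - w| ≤ δ) (hb : |b - w| ≤ δ) :
    (w * steinF x w + (if w ≤ x - δ then 1 else 0) - stdNormalCDF x - (2 * |w| + 3) * δ) * (b - a) ^ 2
      ≤ (steinF x b - steinF x a) * (b - a) ∧
    (steinF x b - steinF x a) * (b - a) ≤
    (w * steinF x w + (if w ≤ x + δ then 1 else 0) - stdNormalCDF x + (2 * |w| + 3) * δ) * (b - a) ^ 2 := by
  have key : ∀ a b, |a - w| ≤ δ → |b - w| ≤ δ → a ≤ b → 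
    (w * steinF x w + (if w ≤ x - δ then 1 else 0) - stdNormalCDF x - (2 * |w| + 3) * δ) * (b - a) ^ 2
      ≤ (steinF x b - steinF x a) * (b - a) ∧
    (steinF x b - steinF x a) * (b - a) ≤
    (w * steinF x w + (if w ≤ x + δ then 1 else 0) - stdNormalCDF x + (2 * |w| + 3) * δ) * (b - a) ^ 2 := by
    intro a b ha hb hab
    have := mvt_off (steinF x) _ x 
      (w * steinF x w + (if w ≤ x - δ then 1 else 0) - stdNormalCDF x - (2 * |w| + 3) * δ)
      (w * steinF x w + (if w ≤ x + δ then 1 else 0) - stdNormalCDF x + (2 * |w| + 3) * δ)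
      (steinF_cont x) (steinF_deriv x) a b hab (by
      intro t ht
      rw [abs_le] at ha hb
      have ht1 : |t - w| ≤ δ := abs_le.mpr ⟨by linarith [ht.1], by linarith [ht.2]⟩
      have h1 : |t * steinF x t - w * steinF x w| ≤ (2 * |w| + 3) * δ := by
        have e : t * steinF x t - w * steinF x w = (t - w) * steinF x t + w * (steinF x t - steinF x w) := by ring
        rw [e]
        refine (abs_add_le _ _).trans ?_
        rw [abs_mul, abs_mul]
        have h2 := mul_le_mul ht1 (steinF_abs x t) (abs_nonneg _) ((abs_nonneg _).trans ht1)
        have h3 := mul_le_mul_of_nonneg_left ((steinF_lip x w t).trans (mul_le_mul_of_nonneg_left ht1 (by norm_num))) (abs_nonneg w)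
        nlinarith
      rw [abs_le] at h1 ht1
      have i1 : (if w ≤ x - δ then (1:ℝ) else 0) ≤ if t ≤ x then 1 else 0 := by
        split_ifs <;> first | (exfalso; linarith) | norm_num
      have i2 : (if t ≤ x then (1:ℝ) else 0) ≤ if w ≤ x + δ then 1 else 0 := by
        split_ifs <;> first | (exfalso; linarith) | norm_num
      constructor <;> linarith)
    have hba := sub_nonneg.mpr hab
    constructor
    · have := mul_le_mul_of_nonneg_right this.1 hba
      rw [pow_two, ← mul_assoc]; exact this
    · have := mul_le_mul_of_nonneg_right this.2 hba
      rw [pow_two, ← mul_assoc]; exact this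
  rcases le_total a b with h | h
  · exact key a b ha hb h
  · have := key b a hb ha h
    rw [show (b - a)^2 = (a-b)^2 by ring, show (steinF x b - steinF x a) * (b - a) = (steinF x a - steinF x b) * (a - b) by ring]
    exact this

section clt
open Equiv

variable {n : ℕ}

noncomputable def YY (a : Fin n → Fin n → ℝ) (π : Perm (Fin n)) : ℝ := ∑ i, a i (π i)

noncomputable def bb (a : Fin n → Fin n → ℝ) (i j k l : Fin n) : ℝ := a i k + a j l - a i l - a j k

lemma YY_swap (a : Fin n → Fin n → ℝ) (π : Perm (Fin n)) (i j : Fin n) :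
    YY a π - YY a (π * swap i j) = bb a i j (π i) (π j) := by
  unfold YY bb
  by_cases h : i = j
  · subst h; simp
  rw [← Finset.sum_sub_distrib, ← Finset.sum_subset (Finset.subset_univ {i, j})]
  · rw [Finset.sum_pair h]; simp; ring
  · intro x _ hx
    simp at hx
    simp [swap_apply_of_ne_of_ne hx.1 hx.2]

lemma YY_diff (a : Fin n → Fin n → ℝ) (A : ℝ) (h0 : ∀ i j, 0 ≤ a i j) (hA : ∀ i j, a i j ≤ A)
    (π ρ : Perm (Fin n)) : |YY a π - YY a ρ| ≤ A * ((univ.filter fun i => π i ≠ ρ i).card : ℝ) := by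
  unfold YY
  rw [← Finset.sum_sub_distrib, Finset.card_filter]
  push_cast
  rw [Finset.mul_sum]
  refine (Finset.abs_sum_le_sum_abs _ _).trans (Finset.sum_le_sum fun i _ => ?_)
  split_ifs with h
  · have := h0 i (π i); have := h0 i (ρ i); have := hA i (π i); have := hA i (ρ i)
    rw [abs_le]; constructor <;> linarith
  · simp only [ne_eq, not_not] at h; simp [h]

lemma card_ne_triangle (π ρ τ : Perm (Fin n)) :
    (univ.filter fun i => π i ≠ τ i).card ≤
      (univ.filter fun i => π i ≠ ρ i).card + (univ.filter fun i => ρ i ≠ τ i).card := by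
  refine (Finset.card_le_card ?_).trans (Finset.card_union_le _ _)
  intro i
  simp only [Finset.mem_filter, Finset.mem_union, Finset.mem_univ, true_and]
  intro h
  by_contra! h2
  exact h (h2.1.trans h2.2)

lemma card_ne_swap_mul (π : Perm (Fin n)) (x y : Fin n) :
    (univ.filter fun i => (swap x y * π) i ≠ π i).card ≤ 2 := by
  refine (Finset.card_le_card (t := {π.symm x, π.symm y}) ?_).trans Finset.card_le_two
  intro i
  simp only [Finset.mem_filter, Finset.mem_univ, true_and, Finset.mem_insert, Finset.mem_singleton]
  intro h
  by_contra! h2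
  apply h
  rw [Perm.mul_apply]
  apply swap_apply_of_ne_of_ne
  · rintro rfl; simp at h2
  · rintro rfl; simp at h2

lemma card_ne_mul_swap (π : Perm (Fin n)) (x y : Fin n) :
    (univ.filter fun i => (π * swap x y) i ≠ π i).card ≤ 2 := by
  rw [Equiv.mul_swap_eq_swap_mul]; exact card_ne_swap_mul _ _ _

lemma sum_bb (a : Fin n → Fin n → ℝ) (π : Perm (Fin n)) :
    ∑ i, ∑ j, bb a i j (π i) (π j) = 2 * n * YY a π - 2 * ∑ i, ∑ j, a i j := by
  unfold bb YY
  have h1 : ∀ i, ∑ j, a i (π j) = ∑ j, a i j := fun i => Equiv.sum_comp π (a i)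
  have h2 : ∑ i, ∑ j, a j (π i) = ∑ i, ∑ j, a i j := by
    rw [Finset.sum_comm]; exact Finset.sum_congr rfl fun i _ => h1 i
  simp only [Finset.sum_sub_distrib, Finset.sum_add_distrib, h1, h2, Finset.sum_const, Finset.card_univ,
    Fintype.card_fin, nsmul_eq_mul, ← Finset.mul_sum]
  ring

lemma bb_anti (a : Fin n → Fin n → ℝ) (i j : Fin n) (f : Perm (Fin n) → ℝ) :
    2 * ∑ π : Perm (Fin n), bb a i j (π i) (π j) * f π =
     ∑ π : Perm (Fin n), bb a i j (π i) (π j) * (f π - f (π * swap i j)) := by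
  have h := Equiv.sum_comp (Equiv.mulRight (swap i j)) fun π : Perm (Fin n) => bb a i j (π i) (π j) * f π
  simp only [Equiv.coe_mulRight, Perm.mul_apply, swap_apply_left, swap_apply_right] at h
  have e : ∀ k l, bb a i j l k = - bb a i j k l := by intro k l; unfold bb; ring
  have h' : ∑ π : Perm (Fin n), bb a i j (π i) (π j) * f (π * swap i j) =
      - ∑ π : Perm (Fin n), bb a i j (π i) (π j) * f π := by
    rw [← h, ← Finset.sum_neg_distrib]
    refine Finset.sum_congr rfl fun π _ => ?_
    rw [e (π i) (π j)]; ring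
  simp only [mul_sub, Finset.sum_sub_distrib, h']
  ring

lemma card_perm_pos : (0:ℝ) < (Fintype.card (Perm (Fin n)) : ℝ) := by
  exact_mod_cast Fintype.card_pos

lemma mean_YY (a : Fin n → Fin n → ℝ) : (n:ℝ) * En (YY a) = ∑ i, ∑ j, a i j := by
  have h1 : ∑ i, ∑ j, 2 * ∑ π : Perm (Fin n), bb a i j (π i) (π j) * 1 = 0 := by
    refine Finset.sum_eq_zero fun i _ => Finset.sum_eq_zero fun j _ => ?_
    rw [bb_anti a i j (fun _ => 1)]; simp
  have h2 : ∑ π : Perm (Fin n), ∑ i, ∑ j, bb a i j (π i) (π j) = 0 := by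
    simp only [mul_one, ← Finset.mul_sum] at h1
    rw [Finset.sum_comm]
    rw [← mul_right_inj' (two_ne_zero' ℝ), mul_zero, ← h1]
    congr 1
    refine Finset.sum_congr rfl fun i _ => ?_
    rw [Finset.sum_comm]
  simp only [sum_bb, Finset.sum_sub_distrib, ← Finset.mul_sum, Finset.sum_const, Finset.card_univ, nsmul_eq_mul] at h2
  have := card_perm_pos (n := n)
  unfold En
  field_simp
  linarith

lemma sum_bb' (a : Fin n → Fin n → ℝ) (π : Perm (Fin n)) :
    ∑ i, ∑ j, bb a i j (π i) (π j) = 2 * n * (YY a π - En (YY a)) := by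
  rw [sum_bb, ← mean_YY]; ring

lemma inv_sum (i : Fin n) (G : Fin n → Fin n → Perm (Fin n) → ℝ) :
    ∑ π : Perm (Fin n), ∑ k, G k (π i) (swap (π i) k * π) = ∑ π : Perm (Fin n), ∑ k, G (π i) k π := by
  let e : Perm (Fin n) × Fin n → Perm (Fin n) × Fin n := fun p => (swap (p.1 i) p.2 * p.1, p.1 i)
  have he : Function.Involutive e := by
    rintro ⟨π, k⟩
    simp only [e, Perm.mul_apply, swap_apply_left, Prod.mk.injEq, and_true]
    rw [swap_comm k, Equiv.swap_mul_self_mul]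
  have := Equiv.sum_comp he.toPerm fun p : Perm (Fin n) × Fin n => G (p.1 i) p.2 p.1
  rw [Fintype.sum_prod_type, Fintype.sum_prod_type] at this
  rw [← this]
  simp [e]

noncomputable def TT (i j k l : Fin n) (π : Perm (Fin n)) : Perm (Fin n) :=
  swap ((swap (π i) k * π) j) l * (swap (π i) k * π)

lemma TT_j (i j k l : Fin n) (π : Perm (Fin n)) : TT i j k l π j = l := by
  unfold TT; rw [Perm.mul_apply, swap_apply_left]

lemma TT_i (i j k l : Fin n) (π : Perm (Fin n)) (h : i ≠ j) (h' : k ≠ l) : TT i j k l π i = k := by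
  unfold TT
  have e : (swap (π i) k * π) i = k := by rw [Perm.mul_apply, swap_apply_left]
  rw [Perm.mul_apply, e]
  apply swap_apply_of_ne_of_ne _ h'
  intro h2
  exact h ((swap (π i) k * π).injective (e.trans h2))

lemma TT_card (i j k l : Fin n) (π : Perm (Fin n)) :
    (univ.filter fun x => (TT i j k l π) x ≠ π x).card ≤ 4 := by
  have := card_ne_triangle (TT i j k l π) (swap (π i) k * π) π
  have h1 := card_ne_swap_mul π (π i) k
  have h2 := card_ne_swap_mul (swap (π i) k * π) ((swap (π i) k * π) j) l
  unfold TT at *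
  omega

lemma zb (i j : Fin n) (hij : i ≠ j) (β : Fin n → Fin n → ℝ) (hβ : ∀ k, β k k = 0) (H : Perm (Fin n) → ℝ) :
    ∑ k, ∑ l, β k l * ∑ π, H (TT i j k l π) =
      n * (n - 1) * ∑ ρ : Perm (Fin n), β (ρ i) (ρ j) * H ρ := by
  have h1 : ∑ k, ∑ l, β k l * ∑ π, H (TT i j k l π) =
      ∑ π : Perm (Fin n), ∑ k, (fun k _ π' => ∑ l, β k l * H (swap (π' j) l * π')) k (π i) (swap (π i) k * π) := by
    simp only [Finset.mul_sum]
    rw [Finset.sum_comm]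
    conv_rhs => rw [Finset.sum_comm]
    rw [Finset.sum_comm]
    refine Finset.sum_congr rfl fun k _ => ?_
    rw [Finset.sum_comm]
    rfl
  rw [h1, inv_sum i (fun k _ π' => ∑ l, β k l * H (swap (π' j) l * π'))]
  simp only [Finset.sum_const, Finset.card_univ, Fintype.card_fin, nsmul_eq_mul, ← Finset.mul_sum]
  rw [mul_assoc]
  congr 1
  have h2 : ∑ π : Perm (Fin n), ∑ l, β (π i) l * H (swap (π j) l * π) =
     ∑ π : Perm (Fin n), ∑ l, (fun l m ρ => β ((swap (ρ j) m * ρ) i) l * H ρ) l (π j) (swap (π j) l * π) := by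
    refine Finset.sum_congr rfl fun π _ => Finset.sum_congr rfl fun l _ => ?_
    simp only
    congr 2
    rw [Perm.mul_apply _ π j, swap_apply_left, swap_comm l, Equiv.swap_mul_self_mul]
  rw [h2, inv_sum j (fun l m ρ => β ((swap (ρ j) m * ρ) i) l * H ρ), Finset.mul_sum]
  refine Finset.sum_congr rfl fun ρ _ => ?_
  have h3 : ∀ m, β ((swap (ρ j) m * ρ) i) (ρ j) * H ρ =
      β (ρ i) (ρ j) * H ρ - if m = ρ i then β (ρ i) (ρ j) * H ρ else 0 := by
    intro m
    split_ifs with h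
    · subst h; simp [hβ]
    · rw [Perm.mul_apply, swap_apply_of_ne_of_ne (fun h => hij (ρ.injective h)) (Ne.symm h)]; simp
  simp only [h3, Finset.sum_sub_distrib]
  simp
  ring

lemma zb_main (a : Fin n → Fin n → ℝ) (f : Perm (Fin n) → ℝ) :
    4 * (n:ℝ)^2 * (n - 1) * ∑ π, (YY a π - En (YY a)) * f π =
    ∑ i, ∑ j, ∑ k, ∑ l, bb a i j k l * ∑ π, (f (TT i j k l π) - f (TT i j k l π * swap i j)) := by
  have h1 : ∀ i j, ∑ k, ∑ l, bb a i j k l * ∑ π, (f (TT i j k l π) - f (TT i j k l π * swap i j))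
     = n * (n-1) * (2 * ∑ π : Perm (Fin n), bb a i j (π i) (π j) * f π) := by
    intro i j
    by_cases hij : i = j
    · subst hij
      have : ∀ k l, bb a i i k l = 0 := by intro k l; unfold bb; ring
      simp [this]
    · rw [zb i j hij (bb a i j) (fun k => by unfold bb; ring) (fun π => f π - f (π * swap i j)), bb_anti]
  simp only [h1, ← Finset.mul_sum]
  have h2 : ∑ i, ∑ j, ∑ π : Perm (Fin n), bb a i j (π i) (π j) * f π =
      2 * n * ∑ π, (YY a π - En (YY a)) * f π := by
    rw [Finset.mul_sum]
    have : ∀ i, ∑ j, ∑ π : Perm (Fin n), bb a i j (π i) (π j) * f π = ∑ π : Perm (Fin n), ∑ j, bb a i j (π i) (π j) * f π :=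
      fun i => Finset.sum_comm
    simp only [this]
    rw [Finset.sum_comm]
    refine Finset.sum_congr rfl fun π _ => ?_
    rw [← mul_assoc, ← sum_bb']
    simp only [Finset.sum_mul]
  rw [h2]; ring

lemma bb_zero_or (a : Fin n → Fin n → ℝ) (i j k l : Fin n) : bb a i j k l = 0 ∨ (i ≠ j ∧ k ≠ l) := by
  by_cases h : i = j
  · left; subst h; unfold bb; ring
  by_cases h' : k = l
  · left; subst h'; unfold bb; ring
  exact Or.inr ⟨h, h'⟩

lemma bb_TT (a : Fin n → Fin n → ℝ) (i j k l : Fin n) (h : i ≠ j ∧ k ≠ l) (π : Perm (Fin n)) :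
    YY a (TT i j k l π) - YY a (TT i j k l π * swap i j) = bb a i j k l := by
  rw [YY_swap, TT_i _ _ _ _ _ h.1 h.2, TT_j]

noncomputable def BBs (a : Fin n → Fin n → ℝ) : ℝ := ∑ i, ∑ j, ∑ k, ∑ l, bb a i j k l ^ 2

lemma sum_En (g : Perm (Fin n) → ℝ) : ∑ π, g π = En g * Fintype.card (Perm (Fin n)) := by
  have := card_perm_pos (n := n)
  unfold En; field_simp

lemma var_YY (a : Fin n → Fin n → ℝ) : 4 * (n:ℝ)^2 * (n - 1) * VarN (YY a) = BBs a := by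
  have h := zb_main a (YY a)
  have h0 := card_perm_pos (n := n)
  have h1 : ∑ i, ∑ j, ∑ k, ∑ l, bb a i j k l * ∑ π, (YY a (TT i j k l π) - YY a (TT i j k l π * swap i j))
      = BBs a * Fintype.card (Perm (Fin n)) := by
    unfold BBs
    simp only [Finset.sum_mul]
    refine Finset.sum_congr rfl fun i _ => Finset.sum_congr rfl fun j _ => Finset.sum_congr rfl fun k _ =>
      Finset.sum_congr rfl fun l _ => ?_
    rcases bb_zero_or a i j k l with h | h
    · simp [h]
    · simp only [bb_TT a i j k l h]
      simp; ring
  rw [h1] at h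
  have h2 : ∑ π, (YY a π - En (YY a)) * YY a π = VarN (YY a) * Fintype.card (Perm (Fin n)) := by
    unfold VarN
    rw [← sum_En]
    have h3 : ∑ π, (YY a π - En (YY a)) * En (YY a) = 0 := by
      rw [← Finset.sum_mul, Finset.sum_sub_distrib, sum_En (YY a)]
      simp; left; ring
    rw [← sub_zero (∑ π, (YY a π - En (YY a)) * YY a π), ← h3, ← Finset.sum_sub_distrib]
    refine Finset.sum_congr rfl fun π _ => by ring
  rw [h2, ← mul_assoc] at h
  exact mul_right_cancel₀ h0.ne' h

lemma Pn_sum (p : Perm (Fin n) → Prop) [DecidablePred p] :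
    ∑ π, (if p π then (1:ℝ) else 0) = Pn p * Fintype.card (Perm (Fin n)) := by
  have := card_perm_pos (n := n)
  unfold Pn; rw [div_mul_cancel₀ _ this.ne', ← Finset.sum_filter]; simp only [Finset.sum_const, nsmul_eq_mul, mul_one]; congr

lemma alg1 (s b D L F : ℝ) (hs : 0 < s) (hb : b = s * D) (h : L * D ^ 2 ≤ F * D) : b ^ 2 / s * L ≤ b * F := by
  subst hb
  have e : (s * D) ^ 2 / s * L = s * (L * D ^ 2) := by field_simp
  rw [e, show s * D * F = s * (F * D) by ring]
  exact mul_le_mul_of_nonneg_left h hs.le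

lemma alg2 (s b D L F : ℝ) (hs : 0 < s) (hb : b = s * D) (h : F * D ≤ L * D ^ 2) : b * F ≤ b ^ 2 / s * L := by
  subst hb
  have e : (s * D) ^ 2 / s * L = s * (L * D ^ 2) := by field_simp
  rw [e, show s * D * F = s * (F * D) by ring]
  exact mul_le_mul_of_nonneg_left h hs.le

lemma clt_step (hn : 2 ≤ n) (a : Fin n → Fin n → ℝ) (A : ℝ) (h0 : ∀ i j, 0 ≤ a i j) (hA : ∀ i j, a i j ≤ A)
    (hA0 : 0 ≤ A) (s : ℝ) (hs : 0 < s) (hsv : s ^ 2 = VarN (YY a)) (x : ℝ) :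
    Pn (fun π => (YY a π - En (YY a)) / s ≤ x - 6 * A / s) ≤ stdNormalCDF x + 7 * (6 * A / s) ∧
    stdNormalCDF x - 7 * (6 * A / s) ≤ Pn (fun π => (YY a π - En (YY a)) / s ≤ x + 6 * A / s) := by
  set δ := 6 * A / s with hδ
  set μ := En (YY a) with hμ
  set W : Perm (Fin n) → ℝ := fun π => (YY a π - μ) / s with hW
  have hδ0 : 0 ≤ δ := by positivity
  set c : ℝ := ((Fintype.card (Perm (Fin n)) : ℕ) : ℝ) with hc
  have hc0 : 0 < c := card_perm_pos
  have hn' : (2:ℝ) ≤ n := by exact_mod_cast hn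
  have hB := var_YY a
  rw [← hsv] at hB
  have hK : 0 < 4 * (n:ℝ)^2 * (n - 1) := by
    have : 0 < (n:ℝ) - 1 := by linarith
    positivity
  -- second moment
  have hW2 : ∑ π, W π ^ 2 = c := by
    have : ∑ π, W π ^ 2 = (∑ π, (YY a π - μ)^2) / s^2 := by
      rw [Finset.sum_div]; simp [hW, div_pow]
    rw [this, sum_En]
    change VarN (YY a) * c / s^2 = c
    rw [← hsv]; field_simp
  have hW1 : ∑ π, |W π| ≤ c := by
    have : ∑ π, |W π| ≤ ∑ π, (1 + W π ^2) / 2 := Finset.sum_le_sum fun π _ => by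
      rw [← sq_abs (W π)]; nlinarith [sq_nonneg (|W π| - 1)]
    rw [← Finset.sum_div, Finset.sum_add_distrib, hW2] at this
    simp only [Finset.sum_const, Finset.card_univ, nsmul_eq_mul, mul_one] at this
    linarith
  have hWd : ∀ π ρ : Perm (Fin n), (univ.filter fun i => ρ i ≠ π i).card ≤ 6 → |W ρ - W π| ≤ δ := by
    intro π ρ h
    have h1 := YY_diff a A h0 hA ρ π
    have h2 : A * ((univ.filter fun i => ρ i ≠ π i).card : ℝ) ≤ A * 6 := by
      gcongr; exact_mod_cast h
    rw [show W ρ - W π = (YY a ρ - YY a π) / s by simp only [hW]; ring, abs_div, abs_of_pos hs, hδ]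
    gcongr; linarith
  have hT1 : ∀ i j k l π, |W (TT i j k l π) - W π| ≤ δ := fun i j k l π =>
    hWd _ _ ((TT_card i j k l π).trans (by norm_num))
  have hT2 : ∀ i j k l π, |W (TT i j k l π * swap i j) - W π| ≤ δ := fun i j k l π => hWd _ _ (by
    have h1 := TT_card i j k l π
    have h2 := card_ne_mul_swap (TT i j k l π) i j
    have h3 := card_ne_triangle (TT i j k l π * swap i j) (TT i j k l π) π
    omega)
  have hmain := zb_main a (fun π => steinF x (W π))
  have hL : ∑ π, (YY a π - μ) * steinF x (W π) = s * ∑ π, W π * steinF x (W π) := by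
    rw [Finset.mul_sum]; refine Finset.sum_congr rfl fun π _ => ?_
    simp only [hW]; field_simp
  rw [← hμ, hL] at hmain
  have hterm : ∀ i j k l π, 
      (bb a i j k l)^2 / s * (W π * steinF x (W π) + (if W π ≤ x - δ then 1 else 0) - stdNormalCDF x - (2 * |W π| + 3) * δ)
       ≤ bb a i j k l * (steinF x (W (TT i j k l π)) - steinF x (W (TT i j k l π * swap i j))) ∧
      bb a i j k l * (steinF x (W (TT i j k l π)) - steinF x (W (TT i j k l π * swap i j))) ≤
      (bb a i j k l)^2 / s * (W π * steinF x (W π) + (if W π ≤ x + δ then 1 else 0) - stdNormalCDF x + (2 * |W π| + 3) * δ) := by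
    intro i j k l π
    rcases bb_zero_or a i j k l with h | h
    · simp [h]
    have hb := bb_TT a i j k l h π
    have hb' : bb a i j k l = s * (W (TT i j k l π) - W (TT i j k l π * swap i j)) := by
      rw [← hb]; simp only [hW]; field_simp; ring
    have := stein_main x (W π) δ _ _ (hT2 i j k l π) (hT1 i j k l π)
    exact ⟨alg1 _ _ _ _ _ hs hb' this.1, alg2 _ _ _ _ _ hs hb' this.2⟩
  have hfac : ∀ g : Perm (Fin n) → ℝ, ∑ i, ∑ j, ∑ k, ∑ l, (bb a i j k l)^2 / s * ∑ π, g π = 4 * (n:ℝ)^2 * (n - 1) * (s * ∑ π, g π) := by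
    intro g
    simp only [← Finset.sum_mul, ← Finset.sum_div]
    change BBs a / s * _ = _
    rw [← hB]; field_simp
  constructor
  · have h1 : 4 * (n:ℝ)^2 * (n - 1) * (s * ∑ π, (W π * steinF x (W π) + (if W π ≤ x - δ then 1 else 0) - stdNormalCDF x - (2 * |W π| + 3) * δ))
       ≤ 4 * (n:ℝ)^2 * (n - 1) * (s * ∑ π, W π * steinF x (W π)) := by
      rw [hmain, ← hfac]
      refine Finset.sum_le_sum fun i _ => Finset.sum_le_sum fun j _ => Finset.sum_le_sum fun k _ =>
        Finset.sum_le_sum fun l _ => ?_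
      rw [Finset.mul_sum, Finset.mul_sum]
      exact Finset.sum_le_sum fun π _ => (hterm i j k l π).1
    have h2 := le_of_mul_le_mul_left (le_of_mul_le_mul_left h1 hK) hs
    simp only [Finset.sum_sub_distrib, Finset.sum_add_distrib, ← Finset.sum_mul, ← Finset.mul_sum,
      Finset.sum_const, Finset.card_univ, nsmul_eq_mul] at h2
    rw [Pn_sum (fun π => W π ≤ x - δ)] at h2
    change Pn (fun π => W π ≤ x - δ) ≤ _
    rw [← hc] at h2
    have h3 := mul_le_mul_of_nonneg_right hW1 hδ0
    refine le_of_mul_le_mul_right (a := c) ?_ hc0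
    nlinarith
  · have h1 : 4 * (n:ℝ)^2 * (n - 1) * (s * ∑ π, W π * steinF x (W π)) ≤ 4 * (n:ℝ)^2 * (n - 1) * (s * ∑ π, (W π * steinF x (W π) + (if W π ≤ x + δ then 1 else 0) - stdNormalCDF x + (2 * |W π| + 3) * δ)) := by
      rw [hmain, ← hfac]
      refine Finset.sum_le_sum fun i _ => Finset.sum_le_sum fun j _ => Finset.sum_le_sum fun k _ =>
        Finset.sum_le_sum fun l _ => ?_
      rw [Finset.mul_sum, Finset.mul_sum]
      exact Finset.sum_le_sum fun π _ => (hterm i j k l π).2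
    have h2 := le_of_mul_le_mul_left (le_of_mul_le_mul_left h1 hK) hs
    simp only [Finset.sum_sub_distrib, Finset.sum_add_distrib, ← Finset.sum_mul, ← Finset.mul_sum,
      Finset.sum_const, Finset.card_univ, nsmul_eq_mul] at h2
    rw [Pn_sum (fun π => W π ≤ x + δ)] at h2
    change _ ≤ Pn (fun π => W π ≤ x + δ)
    rw [← hc] at h2
    have h3 := mul_le_mul_of_nonneg_right hW1 hδ0
    refine le_of_mul_le_mul_right (a := c) ?_ hc0
    nlinarith

lemma clt (hn : 2 ≤ n) (a : Fin n → Fin n → ℝ) (A : ℝ) (h0 : ∀ i j, 0 ≤ a i j) (hA : ∀ i j, a i j ≤ A)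
    (hA0 : 0 ≤ A) (s : ℝ) (hs : 0 < s) (hsv : s ^ 2 = VarN (YY a)) (x : ℝ) :
    |Pn (fun π => (YY a π - En (YY a)) / s ≤ x) - stdNormalCDF x| ≤ 48 * A / s := by
  have hδ0 : 0 ≤ 6 * A / s := by positivity
  have h1 := (clt_step hn a A h0 hA hA0 s hs hsv (x + 6 * A / s)).1
  have h2 := (clt_step hn a A h0 hA hA0 s hs hsv (x - 6 * A / s)).2
  rw [add_sub_cancel_right] at h1
  rw [sub_add_cancel] at h2
  have h3 := N_lip x _ hδ0
  have h4 := N_lip (x - 6 * A / s) _ hδ0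
  rw [sub_add_cancel] at h4
  rw [show 48 * A / s = 8 * (6 * A / s) by ring, abs_le]
  constructor <;> linarith

end clt

section cyc
open Equiv

variable {n : ℕ}

noncomputable def KK (c : Perm (Fin n)) : ℕ := Fintype.card (Quotient (Perm.SameCycle.setoid c))

lemma KK_mk_eq (c : Perm (Fin n)) (x y : Fin n) :
    (Quotient.mk (Perm.SameCycle.setoid c) x = Quotient.mk (Perm.SameCycle.setoid c) y) ↔ c.SameCycle x y :=
  Quotient.eq (r := Perm.SameCycle.setoid c)

lemma KK_burnside : ∑ c : Perm (Fin n), 2 ^ KK c ≤ (n + 1) * Fintype.card (Perm (Fin n)) := by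
  let _ : MulAction (Perm (Fin n)) (Fin n → Bool) := arrowAction
  have hB := MulAction.sum_card_fixedBy_eq_card_orbits_mul_card_group (Perm (Fin n)) (Fin n → Bool)
  have h1 : ∑ c : Perm (Fin n), 2 ^ KK c ≤
      ∑ c : Perm (Fin n), Fintype.card (MulAction.fixedBy (Fin n → Bool) c) := by
    refine Finset.sum_le_sum fun c _ => ?_
    have : 2 ^ KK c = Fintype.card (Quotient (Perm.SameCycle.setoid c) → Bool) := by
      simp [KK]
    rw [this]
    refine Fintype.card_le_of_injective
      (fun F => (⟨fun x => F (Quotient.mk _ x), ?_⟩ : MulAction.fixedBy (Fin n → Bool) c)) ?_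
    · rw [MulAction.mem_fixedBy]
      ext x
      change F (Quotient.mk _ (c⁻¹ • x)) = _
      congr 1
      rw [KK_mk_eq]
      simp [Perm.SameCycle.refl]
    · intro F G h
      simp only [Subtype.mk.injEq] at h
      ext q
      induction q using Quotient.inductionOn with
      | h x => exact congrFun h x
  refine h1.trans ?_
  rw [hB]
  gcongr
  have : Fintype.card (Fin (n+1)) = n + 1 := Fintype.card_fin _
  rw [← this]
  refine Fintype.card_le_of_injective (fun ω => (⟨(univ.filter fun x => (Quotient.out ω) x = true).card, ?_⟩ : Fin (n+1))) ?_
  · have := Finset.card_le_univ (univ.filter fun x => (Quotient.out ω) x = true)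
    simp at this; omega
  · intro ω ω' h
    simp only [Fin.mk.injEq] at h
    rw [← Quotient.out_eq ω, ← Quotient.out_eq ω']
    set F := Quotient.out ω
    set G := Quotient.out ω'
    apply Quotient.sound
    change F ∈ MulAction.orbit _ G
    have hc : Fintype.card {x // G x = true} = Fintype.card {x // F x = true} := by
      rw [Fintype.card_subtype, Fintype.card_subtype, h]
    let e := Fintype.equivOfCardEq hc
    refine ⟨e.extendSubtype, ?_⟩
    ext x
    change G ((e.extendSubtype).symm x) = F x
    obtain ⟨y, rfl⟩ := e.extendSubtype.surjective x
    rw [Equiv.symm_apply_apply]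
    by_cases hy : G y = true
    · rw [hy, e.extendSubtype_mem y hy]
    · have := e.extendSubtype_not_mem y hy
      simp at hy this
      rw [hy, this]

lemma KK_tail (m : ℕ) : Pn (fun c : Perm (Fin n) => m < KK c) ≤ (n + 1) / 2 ^ m := by
  have h0 := card_perm_pos (n := n)
  have h1 : ((univ.filter fun c : Perm (Fin n) => m < KK c).card : ℝ) * 2 ^ m ≤
      (n + 1) * Fintype.card (Perm (Fin n)) := by
    have h2 : (univ.filter fun c : Perm (Fin n) => m < KK c).card * 2 ^ m ≤ ∑ c : Perm (Fin n), 2 ^ KK c := by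
      rw [← smul_eq_mul, ← Finset.sum_const]
      refine (Finset.sum_le_sum fun c hc => ?_).trans (Finset.sum_le_sum_of_subset (Finset.filter_subset _ _))
      simp at hc
      exact Nat.pow_le_pow_right (by norm_num) hc.le
    exact_mod_cast h2.trans KK_burnside
  unfold Pn
  rw [div_le_div_iff₀ h0 (by positivity)]
  refine le_trans (le_of_eq ?_) h1
  congr

lemma KK_sq (c : Perm (Fin n)) : KK (c * c) ≤ 2 * KK c := by
  have : 2 * KK c = Fintype.card (Bool × Quotient (Perm.SameCycle.setoid c)) := by simp [KK]
  rw [this]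
  refine Fintype.card_le_of_surjective (fun p : Bool × Quotient (Perm.SameCycle.setoid c) =>
    Quotient.mk (Perm.SameCycle.setoid (c * c)) (if p.1 then c (Quotient.out p.2) else Quotient.out p.2)) ?_
  intro q
  induction q using Quotient.inductionOn with
  | h y =>
  have hy : c.SameCycle (Quotient.out (Quotient.mk (Perm.SameCycle.setoid c) y)) y := by
    rw [← KK_mk_eq, Quotient.out_eq]
  obtain ⟨k, hk⟩ := hy
  rcases Int.even_or_odd' k with ⟨j, rfl | rfl⟩
  · refine ⟨(false, Quotient.mk _ y), ?_⟩
    simp only [Bool.false_eq_true, if_false]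
    rw [KK_mk_eq]
    refine ⟨j, ?_⟩
    rw [← pow_two, ← zpow_natCast, ← zpow_mul]
    exact hk
  · refine ⟨(true, Quotient.mk _ y), ?_⟩
    simp only [if_true]
    rw [KK_mk_eq]
    refine ⟨j, ?_⟩
    rw [← pow_two, ← zpow_natCast, ← zpow_mul, ← Perm.mul_apply]
    nth_rewrite 2 [← zpow_one c]
    rw [← zpow_add]
    exact hk

lemma merge (c : Perm (Fin n)) (i j : Fin n) (h : ¬ c.SameCycle i j) :
    (c * swap i j).SameCycle i j ∧ ∀ x y, c.SameCycle x y → (c * swap i j).SameCycle x y := by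
  set c' := c * swap i j with hc'
  have hi : c' i = c j := by simp [hc']
  have hj : c' j = c i := by simp [hc']
  have ho : ∀ x, x ≠ i → x ≠ j → c' x = c x := by
    intro x h1 h2; simp [hc', swap_apply_of_ne_of_ne h1 h2]
  have h1 : ∀ m : ℕ, c'.SameCycle i ((c ^ (m+1)) j) := by
    intro m
    induction m with
    | zero => rw [zero_add, pow_one, ← hi]; simp [Perm.SameCycle.refl]
    | succ m ih =>
      rw [pow_succ', Perm.mul_apply]
      set y := (c ^ (m+1)) j with hy
      by_cases h2 : y = j
      · rw [h2, ← hi]; simp [Perm.SameCycle.refl]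
      · have h3 : y ≠ i := by
          intro h3
          apply h
          rw [← h3, hy]; simp [Perm.SameCycle.refl]
        rw [← ho y h3 h2]
        simpa using ih
  have h2 : c'.SameCycle i j := by
    have := h1 (orderOf c - 1)
    rw [Nat.sub_add_cancel (orderOf_pos c), pow_orderOf_eq_one] at this
    exact this
  refine ⟨h2, ?_⟩
  have h3 : ∀ x, c'.SameCycle x (c x) := by
    intro x
    by_cases hxi : x = i
    · subst hxi
      rw [← hj]; simpa using h2
    by_cases hxj : x = j
    · subst hxj
      rw [← hi]; simpa using h2.symm
    · rw [← ho x hxi hxj]; simp [Perm.SameCycle.refl]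
  have h4 : ∀ (m : ℕ) x, c'.SameCycle x ((c ^ m) x) := by
    intro m x
    induction m with
    | zero => simp [Perm.SameCycle.refl]
    | succ m ih => rw [pow_succ', Perm.mul_apply]; exact ih.trans (h3 _)
  intro x y hxy
  obtain ⟨m, -, -, hm⟩ := hxy.exists_pow_eq''
  rw [← hm]; exact h4 m x

lemma KK_merge (c : Perm (Fin n)) (i j : Fin n) (h : ¬ c.SameCycle i j) : KK (c * swap i j) < KK c := by
  obtain ⟨h1, h2⟩ := merge c i j h
  unfold KK
  refine Fintype.card_lt_of_surjective_not_injective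
    (Quotient.map' (s₁ := Perm.SameCycle.setoid c) (s₂ := Perm.SameCycle.setoid (c * swap i j)) id (fun x y hxy => h2 x y hxy)) ?_ ?_
  · intro q
    induction q using Quotient.inductionOn with
    | h y => exact ⟨Quotient.mk _ y, rfl⟩
  · intro hinj
    apply h
    rw [← KK_mk_eq]
    apply hinj
    exact (KK_mk_eq _ _ _).mpr h1

lemma near_rot (hn : 2 ≤ n) : ∀ (k : ℕ) (c : Perm (Fin n)), KK c ≤ k → 
    ∃ θ : Perm (Fin n), (univ.filter fun x => c x ≠ (θ * finRotate n * θ⁻¹) x).card ≤ 2 * k := by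
  intro k
  induction k with
  | zero =>
    intro c hc
    exfalso
    have : 0 < KK c := Fintype.card_pos_iff.mpr ⟨Quotient.mk _ ⟨0, by omega⟩⟩
    omega
  | succ k ih =>
    intro c hc
    by_cases h : ∀ i j, c.SameCycle i j
    · have hcyc : ∀ x, c x ≠ x := by
        intro x hx
        have hx' : ∀ y, x = y := fun y => by
          have := (h x y)
          obtain ⟨m, hm⟩ := this
          rw [← hm, Perm.zpow_apply_eq_self_of_apply_eq_self hx]
        have h1 := hx' ⟨0, by omega⟩
        have h2 := hx' ⟨1, by omega⟩
        rw [h1] at h2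
        simp at h2
      have hc1 : c.IsCycle := ⟨⟨0, by omega⟩, hcyc _, fun y _ => h _ y⟩
      have hconj : IsConj (finRotate n) c := by
        refine (isCycle_finRotate_of_le hn).isConj hc1 ?_
        rw [support_finRotate_of_le hn]
        congr 1
        ext x; simp [hcyc x]
      obtain ⟨θ, hθ⟩ := isConj_iff.mp hconj
      exact ⟨θ, by simp [hθ]⟩
    · push Not at h
      obtain ⟨i, j, h⟩ := h
      obtain ⟨θ, hθ⟩ := ih (c * swap i j) (by have := KK_merge c i j h; omega)
      refine ⟨θ, ?_⟩
      have h1 := card_ne_triangle c (c * swap i j) (θ * finRotate n * θ⁻¹)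
      have h2 := card_ne_mul_swap c i j
      have h3 : (univ.filter fun x => c x ≠ (c * swap i j) x) = (univ.filter fun x => (c * swap i j) x ≠ c x) := by
        ext x; simp [ne_comm]
      rw [h3] at h1
      omega

lemma card_conj (θ a b : Perm (Fin n)) : (univ.filter fun x => (θ * a * θ⁻¹) x ≠ (θ * b * θ⁻¹) x).card =
    (univ.filter fun x => a x ≠ b x).card := by
  refine Finset.card_equiv θ⁻¹ fun x => ?_
  simp [Perm.mul_apply]

lemma near_pair (hn : 2 ≤ n) (c d : Perm (Fin n)) : ∃ θ : Perm (Fin n),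
    (univ.filter fun x => (c * c) x ≠ (θ * d * θ⁻¹) x).card ≤ 4 * KK c + 2 * KK d := by
  obtain ⟨θ1, h1⟩ := near_rot hn _ (c * c) le_rfl
  obtain ⟨θ2, h2⟩ := near_rot hn _ d le_rfl
  have h0 := KK_sq c
  refine ⟨θ1 * θ2⁻¹, ?_⟩
  rw [← card_conj (θ1 * θ2⁻¹)] at h2
  rw [show θ1 * θ2⁻¹ * (θ2 * finRotate n * θ2⁻¹) * (θ1 * θ2⁻¹)⁻¹ = θ1 * finRotate n * θ1⁻¹ by group] at h2
  have h3 := card_ne_triangle (c * c) (θ1 * finRotate n * θ1⁻¹) (θ1 * θ2⁻¹ * d * (θ1 * θ2⁻¹)⁻¹)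
  have h4 : (univ.filter fun x => (θ1 * finRotate n * θ1⁻¹) x ≠ (θ1 * θ2⁻¹ * d * (θ1 * θ2⁻¹)⁻¹) x) = 
    (univ.filter fun x => (θ1 * θ2⁻¹ * d * (θ1 * θ2⁻¹)⁻¹) x ≠ (θ1 * finRotate n * θ1⁻¹) x) := by
    ext x; simp only [Finset.mem_filter, ne_comm]
  rw [h4] at h3
  omega

lemma conj_avg (G : Perm (Fin n) → ℝ) :
    ∑ σ : Perm (Fin n), ∑ π : Perm (Fin n), G (π * σ * π⁻¹) = Fintype.card (Perm (Fin n)) * ∑ σ, G σ := by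
  rw [Finset.sum_comm]
  have : ∀ π : Perm (Fin n), ∑ σ, G (π * σ * π⁻¹) = ∑ σ, G σ := fun π =>
    Equiv.sum_comp (MulAut.conj π).toEquiv G
  simp [this]

lemma transfer (hn : 2 ≤ n) (m : ℕ) (p r : Perm (Fin n) → Prop)
    (hpr : ∀ σ τ : Perm (Fin n), (univ.filter fun x => σ x ≠ τ x).card ≤ 6 * m → p σ → r τ) :
    Pn (fun σ => p (σ * σ)) ≤ Pn r + 2 * Pn (fun c : Perm (Fin n) => m < KK c) := by
  have hN := card_perm_pos (n := n)
  have key : ∀ c d : Perm (Fin n), ∑ π : Perm (Fin n), (if p (π * (c * c) * π⁻¹) then (1:ℝ) else 0) ≤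
      ∑ π : Perm (Fin n), (if r (π * d * π⁻¹) then (1:ℝ) else 0) +
       Fintype.card (Perm (Fin n)) * ((if m < KK c then 1 else 0) + (if m < KK d then 1 else 0)) := by
    intro c d
    have hr0 : 0 ≤ ∑ π : Perm (Fin n), (if r (π * d * π⁻¹) then (1:ℝ) else 0) :=
      Finset.sum_nonneg fun π _ => by split_ifs <;> norm_num
    by_cases hm : m < KK c ∨ m < KK d
    · have h1 : ∑ π : Perm (Fin n), (if p (π * (c * c) * π⁻¹) then (1:ℝ) else 0) ≤ Fintype.card (Perm (Fin n)) := by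
        refine (Finset.sum_le_sum (g := fun _ => (1:ℝ)) fun π _ => ?_).trans ?_
        · split_ifs <;> norm_num
        · simp
      have h2 : (1:ℝ) ≤ ((if m < KK c then 1 else 0) + (if m < KK d then 1 else 0)) := by
        rcases hm with hm | hm <;> simp only [hm, if_true] <;> split_ifs <;> norm_num
      nlinarith
    · push Not at hm
      simp only [not_lt.mpr hm.1, not_lt.mpr hm.2, if_false, add_zero, mul_zero]
      obtain ⟨θ, hθ⟩ := near_pair hn c d
      have h3 := Equiv.sum_comp (Equiv.mulRight θ) fun π : Perm (Fin n) => (if r (π * d * π⁻¹) then (1:ℝ) else 0)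
      rw [← h3]
      refine Finset.sum_le_sum fun π _ => ?_
      change _ ≤ (if r (π * θ * d * (π * θ)⁻¹) then (1:ℝ) else 0)
      by_cases hp : p (π * (c * c) * π⁻¹)
      · have : r (π * θ * d * (π * θ)⁻¹) := by
          refine hpr _ _ ?_ hp
          rw [show π * θ * d * (π * θ)⁻¹ = π * (θ * d * θ⁻¹) * π⁻¹ by group, card_conj]
          omega
        rw [if_pos hp, if_pos this]
      · rw [if_neg hp]; by_cases hr : r (π * θ * d * (π * θ)⁻¹)
        · rw [if_pos hr]; norm_num
        · rw [if_neg hr]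
  have h1 := Finset.sum_le_sum fun (c : Perm (Fin n)) (_ : c ∈ univ) =>
    Finset.sum_le_sum fun (d : Perm (Fin n)) (_ : d ∈ univ) => key c d
  simp only [Finset.sum_add_distrib, mul_add, ← Finset.mul_sum, Finset.sum_const, Finset.card_univ, nsmul_eq_mul] at h1
  rw [conj_avg (fun σ => if r σ then (1:ℝ) else 0)] at h1
  have h2 := conj_avg (fun σ : Perm (Fin n) => if p (σ * σ) then (1:ℝ) else 0)
  have h3 : ∀ π σ : Perm (Fin n), π * σ * π⁻¹ * (π * σ * π⁻¹) = π * (σ * σ) * π⁻¹ := fun π σ => by group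
  simp only [h3] at h2
  rw [h2, Pn_sum, Pn_sum, Pn_sum] at h1
  set N : ℝ := ((Fintype.card (Perm (Fin n)) : ℕ) : ℝ)
  have hN3 : 0 < N * N * N := by positivity
  refine le_of_mul_le_mul_left (a := N * N * N) ?_ hN3
  nlinarith

lemma Pn_not (p : Perm (Fin n) → Prop) : Pn (fun σ => ¬ p σ) = 1 - Pn p := by
  have hN := card_perm_pos (n := n)
  have h := Pn_sum (fun σ => ¬ p σ)
  have h' := Pn_sum p
  have h2 : ∑ π, (if ¬ p π then (1:ℝ) else 0) + ∑ π, (if p π then (1:ℝ) else 0) = Fintype.card (Perm (Fin n)) := by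
    rw [← Finset.sum_add_distrib]
    have : ∀ π, ((if ¬ p π then (1:ℝ) else 0) + if p π then (1:ℝ) else 0) = 1 := by
      intro π; by_cases h : p π <;> simp [h]
    rw [Finset.sum_congr rfl fun π _ => this π]; simp
  rw [h, h', ← add_mul] at h2
  have := mul_right_cancel₀ hN.ne' (h2.trans (one_mul _).symm)
  linarith

lemma transfer' (hn : 2 ≤ n) (m : ℕ) (p r : Perm (Fin n) → Prop)
    (hpr : ∀ σ τ : Perm (Fin n), (univ.filter fun x => σ x ≠ τ x).card ≤ 6 * m → p σ → r τ) :
    Pn p ≤ Pn (fun σ => r (σ * σ)) + 2 * Pn (fun c : Perm (Fin n) => m < KK c) := by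
  have h := transfer hn m (fun σ => ¬ r σ) (fun σ => ¬ p σ) (by
    intro σ τ h h1 h2
    refine h1 (hpr τ σ ?_ h2)
    rw [show (univ.filter fun x => τ x ≠ σ x) = (univ.filter fun x => σ x ≠ τ x) by ext x; simp [ne_comm]]
    exact h)
  rw [Pn_not (fun σ => r (σ * σ)), Pn_not p] at h
  linarith

end cyc

section fin
open Equiv

noncomputable def aq (q : ℝ) (n : ℕ) (i j : Fin n) : ℝ := |((j : ℕ) : ℝ) - ((i : ℕ) : ℝ)| ^ q

lemma rhoq_eq (q : ℝ) (n : ℕ) : (rhoq q (n := n)) = YY (aq q n) := rfl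

lemma aq_nonneg (q : ℝ) (n : ℕ) (i j : Fin n) : 0 ≤ aq q n i j := by unfold aq; positivity

lemma aq_le (q : ℝ) (hq : 1 ≤ q) (n : ℕ) (i j : Fin n) : aq q n i j ≤ (n:ℝ) ^ q := by
  unfold aq
  refine Real.rpow_le_rpow (abs_nonneg _) ?_ (by linarith)
  have h1 : ((i:ℕ):ℝ) ≤ n := by exact_mod_cast i.2.le
  have h2 : ((j:ℕ):ℝ) ≤ n := by exact_mod_cast j.2.le
  have h3 : (0:ℝ) ≤ ((i:ℕ):ℝ) := by positivity
  have h4 : (0:ℝ) ≤ ((j:ℕ):ℝ) := by positivity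
  rw [abs_le]; constructor <;> linarith

lemma sum_ge {n : ℕ} (S : Finset (Fin n)) (f : Fin n → ℝ) (m : ℝ) (h0 : ∀ i, 0 ≤ f i) (h : ∀ i ∈ S, m ≤ f i) :
    (S.card : ℝ) * m ≤ ∑ i, f i := by
  rw [← nsmul_eq_mul, ← Finset.sum_const]
  exact (Finset.sum_le_sum h).trans (Finset.sum_le_sum_of_subset_of_nonneg (Finset.subset_univ _) fun i _ _ => h0 i)

lemma BBs_ge {n : ℕ} (a : Fin n → Fin n → ℝ) (S R : Finset (Fin n)) (M : ℝ)
    (h : ∀ i ∈ S, ∀ j ∈ R, ∀ k ∈ S, ∀ l ∈ R, M ≤ bb a i j k l ^ 2) :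
    (S.card : ℝ) * (R.card * (S.card * (R.card * M))) ≤ BBs a := by
  unfold BBs
  refine sum_ge S _ _ (fun i => by positivity) fun i hi => ?_
  refine sum_ge R _ _ (fun i => by positivity) fun j hj => ?_
  refine sum_ge S _ _ (fun i => by positivity) fun k hk => ?_
  exact sum_ge R _ _ (fun i => by positivity) fun l hl => h i hi j hj k hk l hl

noncomputable def kap (q : ℝ) : ℝ := (1/4:ℝ) ^ q - (1/8:ℝ) ^ q

lemma kap_pos (q : ℝ) (hq : 1 ≤ q) : 0 < kap q := by
  unfold kap
  have := Real.rpow_lt_rpow (x := 1/8) (y := 1/4) (z := q) (by norm_num) (by norm_num) (by linarith)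
  linarith

lemma BBs_aq (q : ℝ) (hq : 1 ≤ q) (n : ℕ) (hn : 2 ≤ n) :
    ((n:ℝ) / 8) ^ 4 * (2 * ((n:ℝ) ^ q * kap q)) ^ 2 ≤ BBs (aq q n) := by
  set S : Finset (Fin n) := univ.filter fun i => 8 * (i:ℕ) ≤ n with hS
  set R : Finset (Fin n) := S.image Fin.rev with hR
  have hRS : R.card = S.card := Finset.card_image_of_injective _ Fin.rev_injective
  have hq0 : 0 < q := by linarith
  have hn' : (2:ℝ) ≤ n := by exact_mod_cast hn
  have hSc : (n:ℝ) / 8 ≤ S.card := by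
    have hle : n / 8 + 1 ≤ n := by omega
    have h1 : (univ : Finset (Fin (n/8+1))).card ≤ S.card := by
      refine Finset.card_le_card_of_injOn (Fin.castLE hle) ?_ ?_
      · intro i _
        simp only [hS, Finset.coe_filter, Finset.mem_univ, true_and, Set.mem_setOf_eq, Fin.val_castLE]
        have := i.2
        omega
      · exact (Fin.castLE_injective hle).injOn
    rw [Finset.card_univ, Fintype.card_fin] at h1
    have h2 : n ≤ 8 * S.card := by omega
    have h3 : (n:ℝ) ≤ 8 * S.card := by exact_mod_cast h2
    linarith
  have hSm : ∀ i ∈ S, 8 * ((i:ℕ):ℝ) ≤ n := by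
    intro i hi
    simp only [hS, Finset.mem_filter, Finset.mem_univ, true_and] at hi
    exact_mod_cast hi
  have hRm : ∀ i ∈ R, 7 * (n:ℝ) - 8 ≤ 8 * ((i:ℕ):ℝ) ∧ ((i:ℕ):ℝ) ≤ n - 1 := by
    intro i hi
    rw [hR, Finset.mem_image] at hi
    obtain ⟨j, hj, rfl⟩ := hi
    have h1 := hSm j hj
    have h2 : ((Fin.rev j : ℕ) : ℝ) = n - 1 - (j:ℕ) := by
      rw [Fin.val_rev, Nat.cast_sub (by omega)]; push_cast; ring
    have h3 : (0:ℝ) ≤ ((j:ℕ):ℝ) := by positivity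
    rw [h2]; constructor <;> linarith
  have hn0 : (0:ℝ) ≤ n := by positivity
  have small : ∀ i j : Fin n, |((j : ℕ) : ℝ) - ((i : ℕ) : ℝ)| ≤ n * (1/8) → aq q n i j ≤ (n:ℝ)^q * (1/8:ℝ)^q := by
    intro i j h
    rw [← Real.mul_rpow hn0 (by norm_num)]
    exact Real.rpow_le_rpow (abs_nonneg _) h hq0.le
  have big : ∀ i j : Fin n, n * (1/4) ≤ |((j : ℕ) : ℝ) - ((i : ℕ) : ℝ)| → (n:ℝ)^q * (1/4:ℝ)^q ≤ aq q n i j := by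
    intro i j h
    rw [← Real.mul_rpow hn0 (by norm_num)]
    exact Real.rpow_le_rpow (by positivity) h hq0.le
  have key := BBs_ge (aq q n) S R ((2 * ((n:ℝ) ^ q * kap q)) ^ 2) (by
    intro i hi j hj k hk l hl
    have i1 := hSm i hi
    have k1 := hSm k hk
    obtain ⟨j1, j2⟩ := hRm j hj
    obtain ⟨l1, l2⟩ := hRm l hl
    have i3 : (0:ℝ) ≤ ((i:ℕ):ℝ) := by positivity
    have k3 : (0:ℝ) ≤ ((k:ℕ):ℝ) := by positivity
    have b1 := small i k (by rw [abs_le]; constructor <;> linarith)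
    have b2 := small j l (by rw [abs_le]; constructor <;> linarith)
    have b3 := big i l (le_trans (by linarith) (le_abs_self _))
    have b4 := big j k (le_trans (by linarith) (neg_le_abs _))
    have hk0 := kap_pos q hq
    have hp : 0 ≤ (n:ℝ)^q := by positivity
    have : 2 * ((n:ℝ) ^ q * kap q) ≤ - bb (aq q n) i j k l := by
      unfold bb kap; linarith
    rw [← neg_sq (bb (aq q n) i j k l)]
    gcongr)
  rw [hRS] at key
  refine le_trans ?_ key
  have hc : (0:ℝ) ≤ n / 8 := by positivity
  calc ((n:ℝ) / 8) ^ 4 * (2 * ((n:ℝ) ^ q * kap q)) ^ 2 ≤ (S.card:ℝ) ^ 4 * (2 * ((n:ℝ) ^ q * kap q)) ^ 2 := by gcongr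
    _ = _ := by ring

lemma sd_ge (q : ℝ) (hq : 1 ≤ q) (n : ℕ) (hn : 2 ≤ n) :
    (n:ℝ) ^ q * kap q * Real.sqrt n / 64 ≤ Real.sqrt (VarN (YY (aq q n))) := by
  have hk := kap_pos q hq
  have hn' : (2:ℝ) ≤ n := by exact_mod_cast hn
  have h1 := BBs_aq q hq n hn
  rw [← var_YY] at h1
  set V := VarN (YY (aq q n))
  apply Real.le_sqrt_of_sq_le
  rw [div_pow, mul_pow, Real.sq_sqrt (by positivity)]
  have hV : 0 ≤ V := by
    by_contra hV
    push Not at hV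
    have h2 : 0 < 4 * (n:ℝ)^2 * (n-1) := by
      have : 0 < (n:ℝ) - 1 := by linarith
      positivity
    have h3 : 0 ≤ ((n:ℝ) / 8) ^ 4 * (2 * ((n:ℝ) ^ q * kap q)) ^ 2 := by positivity
    nlinarith
  have h2 : 4 * (n:ℝ)^2 * (n-1) * V ≤ 4 * (n:ℝ)^3 * V := by
    have : 4 * (n:ℝ)^2 * (n-1) ≤ 4 * (n:ℝ)^3 := by nlinarith [sq_nonneg (n:ℝ)]
    exact mul_le_mul_of_nonneg_right this hV
  have h3 := h1.trans h2
  have h4 : 0 < 4 * (n:ℝ)^3 := by positivity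
  refine le_of_mul_le_mul_left ?_ h4
  refine le_trans (le_of_eq ?_) h3
  ring

end fin

/-- Berry–Esseen bound for `ρ_{q,2}(σ) = ρ_q(σ²) = Σ_i |σ²(i) − i|^q`, normalized with
the mean and standard deviation of `ρ_q`: the Kolmogorov distance to the standard
normal is `O(log n / √n)`; in particular `ρ_{q,2}` is asymptotically Gaussian. -/
theorem rhoq_sq_berry_esseen (q : ℝ) (hq : 1 ≤ q) :
    ∃ C : ℝ, ∀ n : ℕ, 2 ≤ n → ∀ x : ℝ,
      |Pn (fun σ : Equiv.Perm (Fin n) =>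
          (rhoq q (σ * σ) - En (rhoq q (n := n))) /
            Real.sqrt (VarN (rhoq q (n := n))) ≤ x) -
        stdNormalCDF x| ≤ C * Real.log n / Real.sqrt n := by
  have hk := kap_pos q hq
  refine ⟨126 * (64 / kap q) + 8, ?_⟩
  intro n hn x
  rw [rhoq_eq]
  set s := Real.sqrt (VarN (YY (aq q n))) with hs
  have hn' : (2:ℝ) ≤ n := by exact_mod_cast hn
  have hn0 : (0:ℝ) < n := by linarith
  set A : ℝ := (n:ℝ)^q with hA
  have hA0 : 0 < A := by positivity
  have hsn : 0 < Real.sqrt n := Real.sqrt_pos.mpr hn0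
  have hsge := sd_ge q hq n hn
  rw [← hs, ← hA] at hsge
  have hs0 : 0 < s := lt_of_lt_of_le (by positivity) hsge
  have hsv : s ^ 2 = VarN (YY (aq q n)) := by
    refine Real.sq_sqrt ?_
    by_contra h
    push Not at h
    rw [hs, Real.sqrt_eq_zero_of_nonpos h.le] at hs0
    exact lt_irrefl _ hs0
  set η : ℝ := 64 / kap q / Real.sqrt n with hη
  have hη0 : 0 < η := by positivity
  have hAs : A / s ≤ η := by
    rw [hη, div_div, div_le_div_iff₀ hs0 (by positivity)]
    linarith
  have hclt := fun y => clt hn (aq q n) A (aq_nonneg q n) (aq_le q hq n) hA0.le s hs0 hsv y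
  have h48 : 48 * A / s ≤ 48 * η := by rw [mul_div_assoc]; gcongr
  set m : ℕ := ⌈3 * Real.log n⌉₊ with hm
  have hlog : 1/2 ≤ Real.log n := by
    have h1 := Real.log_two_gt_d9
    have h2 := Real.log_le_log (by norm_num) hn'
    linarith
  have hm1 : 3 * Real.log n ≤ m := Nat.le_ceil _
  have hm2 : (m:ℝ) ≤ 5 * Real.log n := by
    have := Nat.ceil_lt_add_one (a := 3 * Real.log n) (by linarith)
    rw [← hm] at this
    linarith
  have hpow : (n:ℝ)^2 ≤ 2 ^ m := by
    have e1 : (2:ℝ)^m = Real.exp (m * Real.log 2) := by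
      rw [mul_comm, Real.exp_mul, Real.exp_log (by norm_num), Real.rpow_natCast]
    have e2 : (n:ℝ)^2 = Real.exp (2 * Real.log n) := by
      rw [mul_comm, Real.exp_mul, Real.exp_log hn0]; norm_cast
    rw [e1, e2, Real.exp_le_exp]
    have h1 := Real.log_two_gt_d9
    nlinarith
  have htail : 2 * Pn (fun c : Equiv.Perm (Fin n) => m < KK c) ≤ 8 * Real.log n / Real.sqrt n := by
    have h1 := KK_tail (n := n) m
    have h2 : ((n:ℝ) + 1) / 2 ^ m ≤ 2 / n := by
      rw [div_le_div_iff₀ (by positivity) hn0]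
      nlinarith
    have h3 : Real.sqrt n ≤ n := by
      rw [Real.sqrt_le_left hn0.le]; nlinarith
    have h4 : 2 / (n:ℝ) ≤ 2 / Real.sqrt n := by gcongr
    have h5 : 4 / Real.sqrt n ≤ 8 * Real.log n / Real.sqrt n := by gcongr; linarith
    have h6 : 4 / Real.sqrt n = 2 * (2 / Real.sqrt n) := by ring
    linarith
  set ε : ℝ := 6 * m * A / s with hε
  have hε0 : 0 ≤ ε := by positivity
  have hεη : ε ≤ 6 * m * η := by rw [hε, mul_div_assoc]; gcongr
  have hshift : ∀ y, ∀ σ τ : Equiv.Perm (Fin n), (univ.filter fun x => σ x ≠ τ x).card ≤ 6 * m →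
      (YY (aq q n) σ - En (YY (aq q n))) / s ≤ y → (YY (aq q n) τ - En (YY (aq q n))) / s ≤ y + ε := by
    intro y σ τ hc hy
    have h1 := YY_diff (aq q n) A (aq_nonneg q n) (aq_le q hq n) σ τ
    have h2 : A * ((univ.filter fun i => σ i ≠ τ i).card : ℝ) ≤ A * (6 * m) := by
      gcongr; exact_mod_cast hc
    have h3 := (abs_le.mp (h1.trans h2)).1
    rw [div_le_iff₀ hs0] at hy ⊢
    rw [add_mul, hε, div_mul_cancel₀ _ hs0.ne']
    linarith
  have t1 := transfer hn m _ _ (hshift x)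
  have t2 := transfer' hn m _ _ (hshift (x - ε))
  simp only [sub_add_cancel] at t2
  have c1 := (abs_le.mp (hclt (x + ε))).2
  have c2 := (abs_le.mp (hclt (x - ε))).1
  have n1 := N_lip x ε hε0
  have n2 := N_lip (x - ε) ε hε0
  rw [sub_add_cancel] at n2
  have hfin : (6 * m + 48) * η + 8 * Real.log n / Real.sqrt n ≤ (126 * (64 / kap q) + 8) * Real.log n / Real.sqrt n := by
    have : (6 * (m:ℝ) + 48) * η ≤ 126 * Real.log n * η := by gcongr; linarith
    have e : 126 * Real.log n * η + 8 * Real.log n / Real.sqrt n = (126 * (64 / kap q) + 8) * Real.log n / Real.sqrt n := by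
      rw [hη]; ring
    linarith
  refine le_trans ?_ hfin
  rw [abs_le]
  constructor <;> linarith
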